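/- arXiv:1407.5544 — 4 statements merged into one kernel-verified Lean document; each statement's English description precedes it below -/
import Mathlib

section
/- Let N ≥ 1, let ψ : ℝ^N → ℝ be a smooth compactly supported function with ψ not identically zero, and let λ ∈ ℝ satisfy ∫_{ℝ^N} |Δψ(x)|² dx + ∫_{ℝ^N} ψ(x)² dx = λ ∫_{ℝ^N} |∇ψ(x)|² dx. Then λ ≥ 2. -/
open MeasureTheory

theorem HasCompactSupport.fun_sq {X : Type*} [TopologicalSpace X] {f : X → ℝ}
    (hc : HasCompactSupport f) : HasCompactSupport (fun x => f x ^ 2) :=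
  hc.comp_left (g := fun t : ℝ => t ^ 2) (zero_pow two_ne_zero)

theorem Continuous.integrable_sq_of_hasCompactSupport {X : Type*} [TopologicalSpace X]
    [MeasurableSpace X] [OpensMeasurableSpace X] {μ : Measure X} [IsFiniteMeasureOnCompacts μ]
    {f : X → ℝ} (hf : Continuous f) (hc : HasCompactSupport f) :
    Integrable (fun x => f x ^ 2) μ :=
  (hf.pow 2).integrable_of_hasCompactSupport hc.fun_sq

/-- Pairing a smooth compactly supported function with its second derivative in the direction `v`
gives minus the Dirichlet energy in that direction. -/
theorem integral_mul_fderiv_fderiv_eq_neg {E : Type*} [NormedAddCommGroup E] [NormedSpace ℝ E]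
    [FiniteDimensional ℝ E] [MeasurableSpace E] [BorelSpace E] {μ : Measure E}
    [μ.IsAddHaarMeasure] {f : E → ℝ} (hf : ContDiff ℝ 2 f) (hc : HasCompactSupport f) (v : E) :
    ∫ x, f x * fderiv ℝ (fun y => fderiv ℝ f y v) x v ∂μ = -∫ x, fderiv ℝ f x v ^ 2 ∂μ := by
  have hf' : ContDiff ℝ 1 (fun y => fderiv ℝ f y v) :=
    (hf.fderiv_right (by norm_num)).clm_apply contDiff_const
  have hf'' : Continuous (fun x => fderiv ℝ (fun y => fderiv ℝ f y v) x v) :=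
    (hf'.continuous_fderiv one_ne_zero).clm_apply continuous_const
  have hc' : HasCompactSupport (fun y => fderiv ℝ f y v) := hc.fderiv_apply ℝ v
  simp only [sq]
  exact integral_mul_fderiv_eq_neg_fderiv_mul_of_integrable
    ((hf'.continuous.mul hf'.continuous).integrable_of_hasCompactSupport hc'.mul_left)
    ((hf.continuous.mul hf'').integrable_of_hasCompactSupport hc.mul_right)
    ((hf.continuous.mul hf'.continuous).integrable_of_hasCompactSupport hc.mul_right)
    (fun x _ => hf.differentiable two_ne_zero x) (fun x _ => hf'.differentiable one_ne_zero x)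

theorem norm_gradient_sq_eq_sum {ι : Type*} [Fintype ι] [DecidableEq ι]
    (f : EuclideanSpace ℝ ι → ℝ) (x : EuclideanSpace ℝ ι) :
    ‖gradient f x‖ ^ 2 = ∑ i, fderiv ℝ f x (EuclideanSpace.single i 1) ^ 2 := by
  rw [EuclideanSpace.norm_sq_eq]
  refine Finset.sum_congr rfl fun i _ => ?_
  have h : gradient f x i = fderiv ℝ f x (EuclideanSpace.single i 1) := by
    rw [← inner_gradient_left, EuclideanSpace.inner_single_right]
    simp
  rw [h, Real.norm_eq_abs, sq_abs]

/-- if a nonzero smooth compactly supported `ψ : ℝ^N → ℝ` satisfies the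
Rayleigh-quotient relation `∫ |Δψ|² + ∫ ψ² = λ ∫ |∇ψ|²`, then `λ ≥ 2`. -/
theorem eigenvalue_ge_two (N : ℕ) (hN : 1 ≤ N)
    (ψ : EuclideanSpace ℝ (Fin N) → ℝ)
    (hψ : ContDiff ℝ (⊤ : ℕ∞) ψ) (hsupp : HasCompactSupport ψ) (hne : ψ ≠ 0)
    (lam : ℝ)
    (heq : (∫ x, (∑ i, fderiv ℝ (fun y => fderiv ℝ ψ y (EuclideanSpace.single i 1)) x
            (EuclideanSpace.single i 1)) ^ 2) + (∫ x, ψ x ^ 2)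
        = lam * ∫ x, ‖gradient ψ x‖ ^ 2) :
    2 ≤ lam := by
  have h2 : ContDiff ℝ 2 ψ := hψ.of_le (WithTop.coe_le_coe.2 le_top)
  set L : EuclideanSpace ℝ (Fin N) → ℝ := fun x =>
    ∑ i, fderiv ℝ (fun y => fderiv ℝ ψ y (EuclideanSpace.single i 1)) x
      (EuclideanSpace.single i 1) with hL
  have hd (i : Fin N) : ContDiff ℝ 1 (fun y => fderiv ℝ ψ y (EuclideanSpace.single i 1)) :=
    (h2.fderiv_right (by norm_num)).clm_apply contDiff_const
  have hdc (i : Fin N) : HasCompactSupport (fun y => fderiv ℝ ψ y (EuclideanSpace.single i 1)) :=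
    hsupp.fderiv_apply ℝ _
  have hdd (i : Fin N) : Continuous (fun x =>
      fderiv ℝ (fun y => fderiv ℝ ψ y (EuclideanSpace.single i 1)) x
        (EuclideanSpace.single i 1)) :=
    ((hd i).continuous_fderiv one_ne_zero).clm_apply continuous_const
  have hLcont : Continuous L := continuous_finsetSum _ fun i _ => hdd i
  have hLsupp : HasCompactSupport L := by
    refine hsupp.mono' fun x hx => ?_
    obtain ⟨i, -, hi⟩ := Finset.exists_ne_zero_of_sum_ne_zero (Function.mem_support.1 hx)
    exact tsupport_fderiv_apply_subset ℝ _
      (tsupport_fderiv_apply_subset ℝ _ (subset_tsupport _ hi))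
  have hψL : Integrable (fun x => ψ x * L x) :=
    (hψ.continuous.mul hLcont).integrable_of_hasCompactSupport hsupp.mul_right
  have hLL : Integrable (fun x => L x ^ 2) := hLcont.integrable_sq_of_hasCompactSupport hLsupp
  have hψψ : Integrable (fun x => ψ x ^ 2) :=
    hψ.continuous.integrable_sq_of_hasCompactSupport hsupp
  have hgreen : ∫ x, ψ x * L x = -∫ x, ‖gradient ψ x‖ ^ 2 := by
    simp only [hL, norm_gradient_sq_eq_sum, Finset.mul_sum]
    have hint (i : Fin N) : Integrable (fun x => ψ x *
        fderiv ℝ (fun y => fderiv ℝ ψ y (EuclideanSpace.single i 1)) x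
          (EuclideanSpace.single i 1)) :=
      (hψ.continuous.mul (hdd i)).integrable_of_hasCompactSupport hsupp.mul_right
    rw [integral_finsetSum _ fun i _ => hint i, integral_finsetSum _ fun i _ =>
      (hd i).continuous.integrable_sq_of_hasCompactSupport (hdc i), ← Finset.sum_neg_distrib]
    exact Finset.sum_congr rfl fun i _ => integral_mul_fderiv_fderiv_eq_neg h2 hsupp _
  have hsquare : ∫ x, (L x + ψ x) ^ 2 =
      (∫ x, L x ^ 2) + (∫ x, ψ x ^ 2) + 2 * ∫ x, ψ x * L x := by
    have hexpand (x) : (L x + ψ x) ^ 2 = (L x ^ 2 + ψ x ^ 2) + 2 * (ψ x * L x) := by ring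
    simp only [hexpand]
    rw [integral_add (by exact hLL.add hψψ) (hψL.const_mul 2), integral_add hLL hψψ,
      integral_const_mul]
  have hsquare_nonneg : 0 ≤ ∫ x, (L x + ψ x) ^ 2 := integral_nonneg fun x => sq_nonneg _
  have hL_nonneg : 0 ≤ ∫ x, L x ^ 2 := integral_nonneg fun x => sq_nonneg _
  have hgrad_nonneg : 0 ≤ ∫ x, ‖gradient ψ x‖ ^ 2 := integral_nonneg fun x => sq_nonneg _
  have hψ_pos : 0 < ∫ x, ψ x ^ 2 := by
    obtain ⟨x, hx⟩ := Function.ne_iff.1 hne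
    exact (hψ.continuous.pow 2).integral_pos_of_hasCompactSupport_nonneg_nonzero
      hsupp.fun_sq (fun x => sq_nonneg _) (x := x)
      (pow_ne_zero 2 hx)
  have hgrad_pos : 0 < ∫ x, ‖gradient ψ x‖ ^ 2 := by
    refine hgrad_nonneg.lt_of_ne fun h => ?_
    rw [← h, mul_zero] at heq
    linarith
  refine le_of_mul_le_mul_right ?_ hgrad_pos
  linarith
end

section
/- Let p > 1 be a real number, set μ = min{1, p−1}, and let a > 0. Define, for s ≥ 0, T(s) = (a+s)^p s − a^p s − ((2+μ)/(p+1)) (a+s)^{p+1} + ((2+μ)/(p+1)) a^{p+1} + (2+μ) a^p s + (μ/2) p a^{p−1} s². Then T(s) ≥ 0 for every s ≥ 0. -/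
/-- A function vanishing at `0` with nonnegative derivative on `[0, ∞)` is nonnegative there. -/
theorem nonneg_of_hasDerivAt_nonneg {f f' : ℝ → ℝ} (h0 : f 0 = 0)
    (hf : ∀ s, 0 ≤ s → HasDerivAt f (f' s) s) (hf' : ∀ s, 0 ≤ s → 0 ≤ f' s)
    {s : ℝ} (hs : 0 ≤ s) : 0 ≤ f s := by
  have hmono : MonotoneOn f (Set.Ici 0) := by
    refine monotoneOn_of_hasDerivWithinAt_nonneg (f' := f') (convex_Ici 0)
      (fun x hx => (hf x hx).continuousAt.continuousWithinAt) ?_ ?_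
    · intro x hx
      exact (hf x (interior_subset hx)).hasDerivWithinAt
    · intro x hx
      exact hf' x (interior_subset hx)
  simpa [h0] using hmono Set.self_mem_Ici hs hs

/-- The tangent line of `x ↦ x ^ q` at `a + s` lies below the graph when `1 ≤ q`. -/
theorem rpow_add_sub_rpow_le {q a s : ℝ} (hq : 1 ≤ q) (ha : 0 < a) (hs : 0 ≤ s) :
    (a + s) ^ q - a ^ q ≤ q * s * (a + s) ^ (q - 1) := by
  have has : 0 < a + s := by positivity
  have hsub : 1 + -s / (a + s) = a / (a + s) := by field_simp; ring
  have hB := one_add_mul_self_le_rpow_one_add (s := -s / (a + s)) (p := q)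
    (by rw [le_div_iff₀ has]; linarith) hq
  rw [hsub, Real.div_rpow ha.le has.le, le_div_iff₀ (Real.rpow_pos_of_pos has q)] at hB
  rw [Real.rpow_sub_one has.ne']
  have : (1 + q * (-s / (a + s))) * (a + s) ^ q
      = (a + s) ^ q - q * s * ((a + s) ^ q / (a + s)) := by ring
  linarith

/-- A bound on the increment of `x ↦ x ^ q` valid in both the concave and the convex range. -/
theorem min_one_mul_rpow_add_sub_rpow_le {q a s : ℝ} (hq : 0 < q) (ha : 0 < a) (hs : 0 ≤ s) :
    min 1 q * ((a + s) ^ q - a ^ q) ≤ q * s * (a + s) ^ (q - 1) := by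
  rcases le_total 1 q with h | h
  · simpa [min_eq_left h] using rpow_add_sub_rpow_le h ha hs
  · have has : 0 < a + s := by positivity
    have hanti : (a + s) ^ (q - 1) ≤ a ^ (q - 1) :=
      Real.rpow_le_rpow_of_nonpos ha (by linarith) (by linarith)
    have e₁ : a ^ q = a ^ (q - 1) * a := by rw [Real.rpow_sub_one ha.ne']; field_simp
    have e₂ : (a + s) ^ q = (a + s) ^ (q - 1) * (a + s) := by
      rw [Real.rpow_sub_one has.ne']; field_simp
    rw [min_eq_right h, mul_assoc, e₁, e₂]
    refine mul_le_mul_of_nonneg_left ?_ hq.le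
    nlinarith [mul_le_mul_of_nonneg_right hanti ha.le]

theorem hasDerivAt_const_add_rpow {a s : ℝ} (r : ℝ) (h : 0 < a + s) :
    HasDerivAt (fun x : ℝ => (a + x) ^ r) (r * (a + s) ^ (r - 1)) s := by
  simpa using ((hasDerivAt_id s).const_add a).rpow_const (p := r) (Or.inl h.ne')

/-- Lemma 3.5(i): for real `p > 1`, `μ = min {1, p-1}` and `a > 0`, the
function `T(s) = (a+s)^p s − a^p s − ((2+μ)/(p+1))(a+s)^{p+1} + ((2+μ)/(p+1)) a^{p+1}
+ (2+μ) a^p s + (μ/2) p a^{p−1} s²` is nonnegative for all `s ≥ 0`. -/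
theorem T_nonneg (p : ℝ) (hp : 1 < p) (a : ℝ) (ha : 0 < a) :
    ∀ s : ℝ, 0 ≤ s →
      0 ≤ (a + s) ^ p * s - a ^ p * s
          - ((2 + min 1 (p - 1)) / (p + 1)) * (a + s) ^ (p + 1)
          + ((2 + min 1 (p - 1)) / (p + 1)) * a ^ (p + 1)
          + (2 + min 1 (p - 1)) * a ^ p * s
          + (min 1 (p - 1) / 2) * p * a ^ (p - 1) * s ^ 2 := by
  set μ := min 1 (p - 1)
  have hp1 : p + 1 ≠ 0 := by linarith
  intro s hs
  refine nonneg_of_hasDerivAt_nonneg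
    (f := fun x : ℝ => (a + x) ^ p * x - a ^ p * x - ((2 + μ) / (p + 1)) * (a + x) ^ (p + 1)
      + ((2 + μ) / (p + 1)) * a ^ (p + 1) + (2 + μ) * a ^ p * x
      + (μ / 2) * p * a ^ (p - 1) * x ^ 2)
    (f' := fun x : ℝ => p * (a + x) ^ (p - 1) * x - (1 + μ) * ((a + x) ^ p - a ^ p)
      + μ * p * a ^ (p - 1) * x) (by simp) ?_ ?_ hs
  · intro x hx
    have hax : 0 < a + x := by positivity
    have hid := hasDerivAt_id' x
    have hsucc := hasDerivAt_const_add_rpow (p + 1) hax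
    rw [add_sub_cancel_right] at hsucc
    refine (((((((hasDerivAt_const_add_rpow p hax).mul hid).sub (hid.const_mul (a ^ p))).sub
      (hsucc.const_mul ((2 + μ) / (p + 1)))).add_const
      (((2 + μ) / (p + 1)) * a ^ (p + 1))).add (hid.const_mul ((2 + μ) * a ^ p))).add
      ((hid.pow 2).const_mul ((μ / 2) * p * a ^ (p - 1)))).congr_deriv ?_
    field_simp
    ring
  · intro x hx
    refine nonneg_of_hasDerivAt_nonneg
      (f := fun y : ℝ => p * (a + y) ^ (p - 1) * y - (1 + μ) * ((a + y) ^ p - a ^ p)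
        + μ * p * a ^ (p - 1) * y)
      (f' := fun y : ℝ => p * ((p - 1) * y * (a + y) ^ (p - 1 - 1)
        - μ * ((a + y) ^ (p - 1) - a ^ (p - 1)))) (by simp) ?_ ?_ hx
    · intro y hy
      have hay : 0 < a + y := by positivity
      have hid := hasDerivAt_id' y
      refine (((((hasDerivAt_const_add_rpow (p - 1) hay).const_mul p).mul hid).sub
        (((hasDerivAt_const_add_rpow p hay).sub_const (a ^ p)).const_mul (1 + μ))).add
        (hid.const_mul (μ * p * a ^ (p - 1)))).congr_deriv ?_
      ring
    · intro y hy
      exact mul_nonneg (by linarith)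
        (sub_nonneg.2 (min_one_mul_rpow_add_sub_rpow_le (by linarith) ha hy))
end

section
/- Let p > 1 be a real number. For a > 0 and s ≥ 0 define H(a,s) = (1/(p+1)) (a+s)^{p+1} − (1/(p+1)) a^{p+1} − s a^p. Then for every ε > 0 there exists a constant C_ε > 0 such that for all a > 0 and all s ≥ 0, H(a,s) − (p/2) a^{p−1} s² ≤ ε a^{p−1} s² + C_ε s^{p+1}. -/
open Set

/-- The tangent-line inequality for `x ↦ x ^ p` at `1 + t`, evaluated at `1`. -/
lemma one_add_rpow_sub_one_le {p t : ℝ} (hp : 1 ≤ p) (ht : 0 ≤ t) :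
    (1 + t) ^ p - 1 ≤ p * t * (1 + t) ^ (p - 1) := by
  have h1 : 0 < 1 + t := by linarith
  have hinv : 1 + -(t / (1 + t)) = (1 + t)⁻¹ := by
    field_simp
    ring
  have hb := one_add_mul_self_le_rpow_one_add (s := -(t / (1 + t))) (p := p)
    (by linarith [(div_le_one h1).2 (by linarith : t ≤ 1 + t)]) hp
  rw [hinv, Real.inv_rpow h1.le] at hb
  have hm := mul_le_mul_of_nonneg_right hb (Real.rpow_pos_of_pos h1 p).le
  rw [inv_mul_cancel₀ (Real.rpow_pos_of_pos h1 p).ne'] at hm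
  have he : (1 + p * -(t / (1 + t))) * (1 + t) ^ p
      = (1 + t) ^ p - p * t * (1 + t) ^ (p - 1) := by
    rw [Real.rpow_sub_one h1.ne']
    ring
  linarith

/-- Second-order Taylor bound for `(1 + t) ^ (p + 1) / (p + 1)` on an interval where
`p * (1 + t) ^ (p - 1)`, its second derivative, is at most `p + 2 * ε`. -/
lemma one_add_rpow_taylor_le {p ε δ t : ℝ} (hp : 1 < p)
    (hδ : p * (1 + δ) ^ (p - 1) ≤ p + 2 * ε) (ht : 0 ≤ t) (htδ : t ≤ δ) :
    1 / (p + 1) * (1 + t) ^ (p + 1) - 1 / (p + 1) - t - p / 2 * t ^ 2 ≤ ε * t ^ 2 := by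
  let F : ℝ → ℝ := fun x => 1 / (p + 1) * (1 + x) ^ (p + 1) - x - (p / 2 + ε) * x ^ 2
  have hderiv : ∀ x : ℝ, 0 ≤ x → HasDerivAt F ((1 + x) ^ p - 1 - (p + 2 * ε) * x) x := by
    intro x hx
    have h1 := ((hasDerivAt_id x).const_add 1).rpow_const (p := p + 1)
      (Or.inl (by simp only [id]; linarith))
    have h2 := ((h1.const_mul (1 / (p + 1))).sub (hasDerivAt_id x)).sub
      (((hasDerivAt_id x).pow 2).const_mul (p / 2 + ε))
    refine h2.congr_deriv ?_
    have : p + 1 ≠ 0 := by linarith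
    simp only [id, add_sub_cancel_right]
    field_simp
    ring
  have hanti : AntitoneOn F (Icc 0 δ) := by
    refine antitoneOn_of_deriv_nonpos (convex_Icc 0 δ)
      (fun x hx => (hderiv x hx.1).continuousAt.continuousWithinAt)
      (fun x hx => (hderiv x (interior_subset hx).1).differentiableAt.differentiableWithinAt) ?_
    intro x hx
    obtain ⟨hx0, hxδ⟩ := interior_subset hx
    rw [(hderiv x hx0).deriv]
    have hmono : (1 + x) ^ (p - 1) ≤ (1 + δ) ^ (p - 1) :=
      Real.rpow_le_rpow (by linarith) (by linarith) (by linarith)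
    have hsecond : p * (1 + x) ^ (p - 1) ≤ p + 2 * ε :=
      (mul_le_mul_of_nonneg_left hmono (by linarith)).trans hδ
    have := mul_le_mul_of_nonneg_left hsecond hx0
    linarith [one_add_rpow_sub_one_le hp.le hx0]
  have h := hanti ⟨le_rfl, ht.trans htδ⟩ ⟨ht, htδ⟩ ht
  simp only [F, add_zero, Real.one_rpow] at h
  linarith

/-- The case `a = 1` of `H_remainder_bound`. -/
lemma one_add_rpow_remainder_bound {p ε : ℝ} (hp : 1 < p) (hε : 0 < ε) :
    ∃ C : ℝ, 0 < C ∧ ∀ t : ℝ, 0 ≤ t →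
      1 / (p + 1) * (1 + t) ^ (p + 1) - 1 / (p + 1) - t - p / 2 * t ^ 2
        ≤ ε * t ^ 2 + C * t ^ (p + 1) := by
  have hp0 : 0 < p := by linarith
  have hp1 : 0 < p - 1 := by linarith
  have hbase : 1 < 1 + 2 * ε / p := by linarith [show 0 < 2 * ε / p by positivity]
  obtain ⟨δ, hδ0, hδ⟩ : ∃ δ : ℝ, 0 < δ ∧ p * (1 + δ) ^ (p - 1) ≤ p + 2 * ε := by
    refine ⟨(1 + 2 * ε / p) ^ (p - 1)⁻¹ - 1,
      sub_pos.2 (Real.one_lt_rpow hbase (inv_pos.2 hp1)), ?_⟩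
    rw [add_sub_cancel, Real.rpow_inv_rpow (by linarith) hp1.ne']
    exact le_of_eq (by field_simp)
  refine ⟨(δ⁻¹ + 1) ^ (p + 1), by positivity, fun t ht => ?_⟩
  rcases le_total t δ with htδ | hδt
  · have := one_add_rpow_taylor_le hp hδ ht htδ
    have : 0 ≤ (δ⁻¹ + 1) ^ (p + 1) * t ^ (p + 1) := by positivity
    linarith
  · have hle : 1 + t ≤ (δ⁻¹ + 1) * t := by
      have : 1 ≤ δ⁻¹ * t := by
        rw [inv_mul_eq_div]
        exact (one_le_div hδ0).2 hδt
      linarith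
    have hpow := Real.rpow_le_rpow (by linarith) hle (by linarith : 0 ≤ p + 1)
    rw [Real.mul_rpow (by positivity) ht] at hpow
    have hcoef : 1 / (p + 1) * (1 + t) ^ (p + 1) ≤ (1 + t) ^ (p + 1) :=
      mul_le_of_le_one_left (by positivity) ((div_le_one (by linarith)).2 (by linarith))
    have : 0 ≤ 1 / (p + 1) := by positivity
    have : 0 ≤ p / 2 * t ^ 2 := by positivity
    have : 0 ≤ ε * t ^ 2 := by positivity
    linarith

/-- Lemma 3.5(ii): with `p > 1` and
`H(a,s) = (1/(p+1))(a+s)^{p+1} − (1/(p+1)) a^{p+1} − s a^p`, for every `ε > 0` there is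
`C_ε > 0` such that `H(a,s) − (p/2) a^{p−1} s² ≤ ε a^{p−1} s² + C_ε s^{p+1}` for all
`a > 0`, `s ≥ 0`. -/
theorem H_remainder_bound (p : ℝ) (hp : 1 < p) :
    ∀ ε : ℝ, 0 < ε → ∃ C : ℝ, 0 < C ∧ ∀ a : ℝ, 0 < a → ∀ s : ℝ, 0 ≤ s →
      (1 / (p + 1)) * (a + s) ^ (p + 1) - (1 / (p + 1)) * a ^ (p + 1) - s * a ^ p
          - (p / 2) * a ^ (p - 1) * s ^ 2
        ≤ ε * a ^ (p - 1) * s ^ 2 + C * s ^ (p + 1) := by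
  intro ε hε
  obtain ⟨C, hC, h⟩ := one_add_rpow_remainder_bound hp hε
  refine ⟨C, hC, fun a ha s hs => ?_⟩
  obtain ⟨t, ht, rfl⟩ : ∃ t : ℝ, 0 ≤ t ∧ s = a * t :=
    ⟨s / a, by positivity, by field_simp⟩
  have hsum : a + a * t = a * (1 + t) := by ring
  have hpow : a ^ p = a ^ (p - 1) * a := by
    rw [Real.rpow_sub_one ha.ne']
    field_simp
  rw [hsum, Real.mul_rpow ha.le (by linarith), Real.mul_rpow ha.le ht,
    Real.rpow_add_one ha.ne', hpow]
  have hscale := mul_le_mul_of_nonneg_left (h t ht)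
    (by positivity : 0 ≤ a ^ (p - 1) * a * a)
  linarith
end

section
/- (Mountain Pass Theorem.) Let E be a real Banach space and let F : E → ℝ be Fréchet differentiable with continuous derivative DF : E → E* (i.e. F ∈ C¹(E, ℝ)), with F(0) = 0. Assume F satisfies the Palais–Smale condition: every sequence (u_n) in E such that the sequence (F(u_n)) is bounded and ‖DF(u_n)‖_{E*} → 0 has a convergent subsequence. Assume further that (a) there exist ρ > 0 and α > 0 such that F(u) ≥ α for all u ∈ E with ‖u‖ = ρ, and (b) there exists e ∈ E with ‖e‖ > ρ and F(e) ≤ 0. Define c = inf over all continuous paths g : [0,1] → E with g(0) = 0 and g(1) = e, of sup_{θ ∈ [0,1]} F(g(θ)). Then c ≥ α > 0 and c is a critical value of F: there exists u ∈ E with F(u) = c and DF(u) = 0. -/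
open Filter Set

open scoped Topology unitInterval

/-- **Ekeland's variational principle**: a lower semicontinuous function bounded below on a complete
metric space has, below any given level it attains, an `ε`-almost minimum in the strong sense. -/
theorem LowerSemicontinuous.exists_forall_le_add_mul_dist {X : Type*} [MetricSpace X]
    [CompleteSpace X] {f : X → ℝ} (hf : LowerSemicontinuous f) (hbdd : BddBelow (range f))
    {ε : ℝ} (hε : 0 < ε) (x₀ : X) :
    ∃ x, f x ≤ f x₀ ∧ ∀ y, f x ≤ f y + ε * dist x y := by
  let S : X → Set X := fun x => {y | f y + ε * dist x y ≤ f x}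
  have hSself : ∀ x, x ∈ S x := fun x => by simp [S]
  have hStrans : ∀ {x y z}, y ∈ S x → z ∈ S y → z ∈ S x := by
    intro x y z hy hz
    have := mul_le_mul_of_nonneg_left (dist_triangle x y z) hε.le
    simp only [S, mem_ofPred_eq] at hy hz ⊢
    linarith
  have hSclosed : ∀ x, IsClosed (S x) := by
    intro x
    have hcont : Continuous fun y => ε * dist x y := by fun_prop
    exact (hf.add hcont.lowerSemicontinuous).isClosed_preimage (f x)
  have hstep : ∀ (n : ℕ) (x : X), ∃ y ∈ S x, ∀ z ∈ S x, f y ≤ f z + 1 / ((n : ℝ) + 1) := by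
    intro n x
    have hne : (f '' S x).Nonempty := ⟨f x, x, hSself x, rfl⟩
    obtain ⟨_, ⟨y, hy, rfl⟩, hlt⟩ := exists_lt_of_csInf_lt hne
      (lt_add_of_pos_right (sInf (f '' S x)) (Nat.one_div_pos_of_nat (α := ℝ) (n := n)))
    refine ⟨y, hy, fun z hz => ?_⟩
    have := csInf_le (hbdd.mono (image_subset_range f (S x))) ⟨z, hz, rfl⟩
    linarith
  choose next hnextS hnextmin using hstep
  let u : ℕ → X := fun n => Nat.rec x₀ next n
  have hmem : ∀ {n m}, n ≤ m → u m ∈ S (u n) := by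
    intro n m hnm
    induction m, hnm using Nat.le_induction with
    | base => exact hSself _
    | succ m _ ih => exact hStrans ih (hnextS m (u m))
  have hanti : Antitone (f ∘ u) := by
    intro n m hnm
    have h := hmem hnm
    have := mul_nonneg hε.le (dist_nonneg (x := u n) (y := u m))
    simp only [S, mem_ofPred_eq] at h
    simp only [Function.comp_apply]
    linarith
  have hlim := tendsto_atTop_ciInf hanti (hbdd.mono (range_comp_subset_range u f))
  have hcauchy : CauchySeq u := by
    rw [Metric.cauchySeq_iff']
    intro δ hδ
    obtain ⟨N, hN⟩ := Metric.cauchySeq_iff'.1 hlim.cauchySeq (ε * δ) (mul_pos hε hδ)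
    refine ⟨N, fun n hn => ?_⟩
    have h := hmem hn
    have h' := hN n hn
    rw [Real.dist_eq, abs_lt] at h'
    simp only [S, mem_ofPred_eq] at h
    simp only [Function.comp_apply] at h'
    rw [dist_comm]
    exact lt_of_mul_lt_mul_left (by linarith) hε.le
  obtain ⟨x, hx⟩ := cauchySeq_tendsto_of_complete hcauchy
  have hxS : ∀ n, x ∈ S (u n) := fun n =>
    (hSclosed _).mem_of_tendsto hx ((eventually_ge_atTop n).mono fun _ => hmem)
  have hfx : ∀ n, f x ≤ f (u n) := by
    intro n
    have h := hxS n
    have := mul_nonneg hε.le (dist_nonneg (x := u n) (y := x))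
    simp only [S, mem_ofPred_eq] at h
    linarith
  refine ⟨x, hfx 0, fun y => ?_⟩
  by_contra! hlt
  have hy : y ∈ S x := hlt.le
  have hle : f x ≤ f y := by
    have hlim' : Tendsto (fun n : ℕ => f y + 1 / ((n : ℝ) + 1)) atTop (𝓝 (f y + 0)) :=
      tendsto_const_nhds.add tendsto_one_div_add_atTop_nhds_zero_nat
    rw [add_zero] at hlim'
    exact ge_of_tendsto' hlim' fun n =>
      (hfx (n + 1)).trans (hnextmin n (u n) y (hStrans (hxS n) hy))
  have := mul_nonneg hε.le (dist_nonneg (x := x) (y := y))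
  linarith

/-- A functional of operator norm larger than `r` takes a value below `-r` on the unit ball. -/
theorem ContinuousLinearMap.exists_norm_le_one_apply_lt_neg {E : Type*} [NormedAddCommGroup E]
    [NormedSpace ℝ E] (L : E →L[ℝ] ℝ) {r : ℝ} (hL : r < ‖L‖) :
    ∃ v : E, ‖v‖ ≤ 1 ∧ L v < -r := by
  obtain ⟨v, hv, hlt⟩ := L.exists_lt_apply_of_lt_opNorm hL
  rcases lt_abs.1 hlt with h | h
  · exact ⟨-v, by simpa using hv.le, by simpa using h⟩
  · exact ⟨v, hv.le, by linarith⟩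

section PathSpace

variable {E : Type*} [NormedAddCommGroup E]

/-- The maximum of a functional along a continuous path. -/
noncomputable def pathSup (F : E → ℝ) (g : C(I, E)) : ℝ := ⨆ t, F (g t)

theorem bddAbove_range_comp_path {F : E → ℝ} (hF : Continuous F) (g : C(I, E)) :
    BddAbove (range fun t => F (g t)) :=
  (isCompact_range (hF.comp g.continuous)).bddAbove

theorem le_pathSup {F : E → ℝ} (hF : Continuous F) (g : C(I, E)) (t : I) :
    F (g t) ≤ pathSup F g :=
  le_ciSup (bddAbove_range_comp_path hF g) t

theorem exists_eq_pathSup {F : E → ℝ} (hF : Continuous F) (g : C(I, E)) :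
    ∃ t, F (g t) = pathSup F g := by
  obtain ⟨t, ht⟩ := (isCompact_range (hF.comp g.continuous)).sSup_mem (range_nonempty _)
  exact ⟨t, ht⟩

theorem lowerSemicontinuous_pathSup {F : E → ℝ} (hF : Continuous F) :
    LowerSemicontinuous (pathSup F) :=
  lowerSemicontinuous_ciSup (bddAbove_range_comp_path hF) fun t =>
    (hF.comp (continuous_eval_const t)).lowerSemicontinuous

/-- A path from `0` to a point outside the ball of radius `ρ` meets the sphere of radius `ρ`. -/
theorem exists_norm_path_eq {g : C(I, E)} {ρ : ℝ} (hρ : 0 ≤ ρ) (h0 : g 0 = 0)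
    (h1 : ρ ≤ ‖g 1‖) : ∃ t, ‖g t‖ = ρ :=
  mem_range_of_exists_le_of_exists_ge (by fun_prop : Continuous fun t => ‖g t‖)
    ⟨0, by simpa [h0] using hρ⟩ ⟨1, h1⟩

/-- The space of continuous paths from `a` to `b`, with the uniform distance. -/
abbrev PathsBetween (a b : E) : Type _ := {g : C(I, E) // g 0 = a ∧ g 1 = b}

instance [CompleteSpace E] (a b : E) : CompleteSpace (PathsBetween a b) := by
  have hclosed : IsClosed {g : C(I, E) | g 0 = a ∧ g 1 = b} :=
    (isClosed_eq (continuous_eval_const (0 : I)) continuous_const).inter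
      (isClosed_eq (continuous_eval_const (1 : I)) continuous_const)
  exact hclosed.completeSpace_coe

theorem setOf_sSup_image_eq_range_pathSup (F : E → ℝ) (a b : E) :
    {t : ℝ | ∃ g : ℝ → E, ContinuousOn g (Icc 0 1) ∧ g 0 = a ∧ g 1 = b ∧
      t = sSup ((fun θ => F (g θ)) '' Icc 0 1)} =
    range fun g : PathsBetween a b => pathSup F g.1 := by
  ext t
  constructor
  · rintro ⟨g, hg, h0, h1, rfl⟩
    refine ⟨⟨⟨(Icc 0 1).domRestrict g, hg.domRestrict⟩, h0, h1⟩, ?_⟩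
    rw [sSup_image']
    rfl
  · rintro ⟨⟨g, h0, h1⟩, rfl⟩
    refine ⟨IccExtend zero_le_one g, g.continuous.Icc_extend'.continuousOn, ?_, ?_, ?_⟩
    · simpa using h0
    · simpa using h1
    · rw [sSup_image']
      simp [pathSup]

variable [NormedSpace ℝ E]

/-- If the derivative of `F` is larger than `r` in norm at all maximum points of `F` along `g`,
and the endpoints are not maximum points, then there is a field of directions along `g`, vanishing
at the endpoints, in which `F` decreases at rate `r` at the maximum points. -/
theorem exists_descent_field {F : E → ℝ} (hF : Continuous F) (hF' : Continuous (fderiv ℝ F))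
    (g : C(I, E)) {r : ℝ} (h0 : F (g 0) < pathSup F g)
    (h1 : F (g 1) < pathSup F g)
    (hlarge : ∀ t, F (g t) = pathSup F g → r < ‖fderiv ℝ F (g t)‖) :
    ∃ w : C(I, E), (∀ t, ‖w t‖ ≤ 1) ∧ w 0 = 0 ∧ w 1 = 0 ∧
      ∀ t, F (g t) = pathSup F g → fderiv ℝ F (g t) (w t) < -r := by
  let D : I → Set E := fun t => {v | ‖v‖ ≤ 1 ∧ (t = 0 → v = 0) ∧ (t = 1 → v = 0) ∧
    (F (g t) = pathSup F g → fderiv ℝ F (g t) v < -r)}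
  have hD : ∀ t, Convex ℝ (D t) := by
    rintro t v ⟨hv, hv0, hv1, hvr⟩ w ⟨hw, hw0, hw1, hwr⟩ a b ha hb hab
    refine ⟨?_, fun h => by simp [hv0 h, hw0 h], fun h => by simp [hv1 h, hw1 h], fun h => ?_⟩
    · simpa using convex_closedBall (0 : E) 1 (by simpa using hv) (by simpa using hw) ha hb hab
    · exact convex_halfSpace_lt (fderiv ℝ F (g t)).isLinear (-r) (hvr h) (hwr h) ha hb hab
  have hloc : ∀ t, ∃ v, ∀ᶠ s in 𝓝 t, v ∈ D s := by
    intro t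
    by_cases ht : F (g t) = pathSup F g
    · obtain ⟨v, hv, hvr⟩ := (fderiv ℝ F (g t)).exists_norm_le_one_apply_lt_neg (hlarge t ht)
      have hcont : Continuous fun s => fderiv ℝ F (g s) v :=
        (hF'.comp g.continuous).clm_apply continuous_const
      have ht0 : t ≠ 0 := by rintro rfl; exact h0.ne ht
      have ht1 : t ≠ 1 := by rintro rfl; exact h1.ne ht
      refine ⟨v, ?_⟩
      filter_upwards [hcont.continuousAt.eventually_lt continuousAt_const hvr,
        isOpen_ne.mem_nhds ht0, isOpen_ne.mem_nhds ht1] with s hs hs0 hs1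
      exact ⟨hv, fun h => absurd h hs0, fun h => absurd h hs1, fun _ => hs⟩
    · refine ⟨0, ?_⟩
      filter_upwards [(hF.comp g.continuous).continuousAt.eventually_ne ht] with s hs
      exact ⟨by simp, fun _ => rfl, fun _ => rfl, fun h => absurd h hs⟩
  obtain ⟨w, hw⟩ := exists_continuous_forall_mem_convex_of_local_const hD hloc
  exact ⟨w, fun t => (hw t).1, (hw 0).2.1 rfl, (hw 1).2.2.1 rfl, fun t => (hw t).2.2.2⟩

/-- A small step in a direction of descent at rate `2 * ε` lowers the maximum of `F` along the path
at rate `ε`. -/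
theorem eventually_pathSup_add_smul_lt {F : E → ℝ} (hF : ContDiff ℝ 1 F) (g w : C(I, E)) {ε : ℝ}
    (hε : 0 < ε) (hw : ∀ t, ‖w t‖ ≤ 1)
    (hdesc : ∀ t, F (g t) = pathSup F g → fderiv ℝ F (g t) (w t) < -(2 * ε)) :
    ∀ᶠ s : ℝ in 𝓝[>] 0, pathSup F (g + s • w) < pathSup F g - ε * s := by
  have hFc : Continuous F := hF.continuous
  have hloc : ∀ t ∈ (univ : Set I), ∀ᶠ z : ℝ × I in 𝓝 ((0 : ℝ), t),
      0 < z.1 → F (g z.2 + z.1 • w z.2) < pathSup F g - ε * z.1 := by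
    intro t _
    by_cases ht : F (g t) = pathSup F g
    · have hstrict : HasStrictFDerivAt F (fderiv ℝ F (g t)) (g t) :=
        hF.contDiffAt.hasStrictFDerivAt one_ne_zero
      have hpair : Tendsto (fun z : ℝ × I => (g z.2 + z.1 • w z.2, g z.2)) (𝓝 ((0 : ℝ), t))
          (𝓝 (g t, g t)) := by
        have hc : Continuous fun z : ℝ × I => (g z.2 + z.1 • w z.2, g z.2) := by fun_prop
        simpa using hc.tendsto ((0 : ℝ), t)
      have hdir : ∀ᶠ z : ℝ × I in 𝓝 ((0 : ℝ), t), fderiv ℝ F (g t) (w z.2) < -(2 * ε) := by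
        have hc : Continuous fun z : ℝ × I => fderiv ℝ F (g t) (w z.2) := by fun_prop
        exact hc.continuousAt.eventually_lt continuousAt_const (hdesc t ht)
      filter_upwards [hpair.eventually (hstrict.isLittleO.def hε), hdir] with z hz hzw hpos
      simp only [add_sub_cancel_left, map_smul, smul_eq_mul, norm_smul, Real.norm_eq_abs,
        abs_of_pos hpos] at hz
      have hnorm : ε * (z.1 * ‖w z.2‖) ≤ ε * z.1 :=
        mul_le_mul_of_nonneg_left (mul_le_of_le_one_right hpos.le (hw z.2)) hε.le
      have hmul := mul_lt_mul_of_pos_left hzw hpos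
      have hle := le_pathSup hFc g z.2
      linarith [le_abs_self (F (g z.2 + z.1 • w z.2) - F (g z.2)
        - z.1 * fderiv ℝ F (g t) (w z.2))]
    · have hlt : F (g t) < pathSup F g := lt_of_le_of_ne (le_pathSup hFc g t) ht
      have hl : Continuous fun z : ℝ × I => F (g z.2 + z.1 • w z.2) := by fun_prop
      have hr : Continuous fun z : ℝ × I => pathSup F g - ε * z.1 := by fun_prop
      filter_upwards [hl.continuousAt.eventually_lt (x₀ := ((0 : ℝ), t)) hr.continuousAt
        (by simpa using hlt)] with z hz _
      exact hz
  have hall := isCompact_univ.eventually_forall_of_forall_eventually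
    (P := fun s t => 0 < s → F (g t + s • w t) < pathSup F g - ε * s) hloc
  filter_upwards [nhdsWithin_le_nhds hall, self_mem_nhdsWithin] with s hs hpos
  obtain ⟨t, ht⟩ := exists_eq_pathSup hFc (g + s • w)
  rw [← ht]
  exact hs t (mem_univ t) hpos

theorem nonempty_pathsBetween (a b : E) : Nonempty (PathsBetween a b) :=
  ⟨⟨fun t => AffineMap.lineMap a b (t : ℝ), by fun_prop⟩, by simp, by simp⟩

/-- An `ε`-almost minimum, in Ekeland's sense, of the maximum of `F` along paths with fixed
endpoints has a maximum point at which the derivative of `F` is at most `2 * ε`. -/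
theorem exists_norm_fderiv_le_of_forall_pathSup_le {F : E → ℝ} (hF : ContDiff ℝ 1 F) {a b : E}
    (g : PathsBetween a b) {ε : ℝ} (hε : 0 < ε) (ha : F a < pathSup F g.1)
    (hb : F b < pathSup F g.1)
    (hmin : ∀ h : PathsBetween a b, pathSup F g.1 ≤ pathSup F h.1 + ε * dist g h) :
    ∃ u, F u = pathSup F g.1 ∧ ‖fderiv ℝ F u‖ ≤ 2 * ε := by
  by_contra! hcon
  obtain ⟨g, rfl, rfl⟩ := g
  obtain ⟨w, hw, hw0, hw1, hdesc⟩ := exists_descent_field hF.continuous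
    (hF.continuous_fderiv one_ne_zero) g ha hb
    fun t ht => hcon _ ht
  obtain ⟨s, hs, hpos⟩ :=
    ((eventually_pathSup_add_smul_lt hF g w hε hw hdesc).and self_mem_nhdsWithin).exists
  have hle := hmin ⟨g + s • w, by simp [hw0], by simp [hw1]⟩
  have hdist : dist g (g + s • w) ≤ s := by
    rw [ContinuousMap.dist_le hpos.le]
    intro t
    simpa [norm_smul, abs_of_pos hpos] using mul_le_of_le_one_right hpos.le (hw t)
  rw [Subtype.dist_eq] at hle
  have := mul_le_mul_of_nonneg_left hdist hε.le
  simp only at hle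
  linarith

end PathSpace

/-- Mountain Pass Theorem, Ambrosetti–Rabinowitz. Let `E` be a real Banach
space and `F : E → ℝ` a `C¹` functional (Fréchet differentiable with continuous
derivative), `F(0) = 0`, satisfying the Palais–Smale condition. If `F ≥ α > 0` on the
sphere of radius `ρ > 0` and there is `e` with `‖e‖ > ρ` and `F(e) ≤ 0`, then the
min-max value `c = inf_{paths g from 0 to e} sup_{θ ∈ [0,1]} F(g(θ))` satisfies
`c ≥ α > 0` and is a critical value of `F`. -/
theorem mountain_pass {E : Type*} [NormedAddCommGroup E] [NormedSpace ℝ E]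
    [CompleteSpace E] (F : E → ℝ)
    (hdiff : Differentiable ℝ F)
    (hderiv_cont : Continuous fun u => fderiv ℝ F u)
    (hF0 : F 0 = 0)
    (hPS : ∀ u : ℕ → E,
      (∃ M : ℝ, ∀ n, |F (u n)| ≤ M) →
      Tendsto (fun n => ‖fderiv ℝ F (u n)‖) atTop (nhds 0) →
      ∃ φ : ℕ → ℕ, StrictMono φ ∧ ∃ x : E, Tendsto (u ∘ φ) atTop (nhds x))
    (ρ α : ℝ) (hρ : 0 < ρ) (hα : 0 < α)
    (hsphere : ∀ u : E, ‖u‖ = ρ → α ≤ F u)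
    (e : E) (he : ρ < ‖e‖) (hFe : F e ≤ 0) :
    ∀ c : ℝ,
      c = sInf {t : ℝ | ∃ g : ℝ → E, ContinuousOn g (Icc 0 1) ∧ g 0 = 0 ∧ g 1 = e ∧
            t = sSup ((fun θ => F (g θ)) '' Icc 0 1)} →
      α ≤ c ∧ 0 < c ∧ ∃ u : E, F u = c ∧ fderiv ℝ F u = 0 := by
  intro c hc
  have hF : ContDiff ℝ 1 F := contDiff_one_iff_fderiv.2 ⟨hdiff, hderiv_cont⟩
  let Φ : PathsBetween 0 e → ℝ := fun g => pathSup F g.1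
  have hΦ : ∀ g, α ≤ Φ g := by
    intro g
    obtain ⟨t, ht⟩ := exists_norm_path_eq hρ.le g.2.1 (by rw [g.2.2]; exact he.le)
    exact (hsphere _ ht).trans (le_pathSup hF.continuous g.1 t)
  have hbdd : BddBelow (range Φ) := ⟨α, forall_mem_range.2 hΦ⟩
  have hlsc : LowerSemicontinuous Φ :=
    (lowerSemicontinuous_pathSup hF.continuous).comp continuous_subtype_val
  have : Nonempty (PathsBetween 0 e) := nonempty_pathsBetween 0 e
  rw [setOf_sSup_image_eq_range_pathSup] at hc
  have hcΦ : ∀ g, c ≤ Φ g := fun g => hc ▸ csInf_le hbdd ⟨g, rfl⟩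
  have hαc : α ≤ c := hc ▸ le_csInf (range_nonempty Φ) (forall_mem_range.2 hΦ)
  refine ⟨hαc, hα.trans_le hαc, ?_⟩
  have hseq : ∀ n : ℕ, ∃ u, c ≤ F u ∧ F u ≤ c + 1 / ((n : ℝ) + 1) ∧
      ‖fderiv ℝ F u‖ ≤ 2 * (1 / ((n : ℝ) + 1)) := by
    intro n
    have hε : 0 < 1 / ((n : ℝ) + 1) := Nat.one_div_pos_of_nat
    obtain ⟨_, ⟨g₀, rfl⟩, hg₀⟩ := exists_lt_of_csInf_lt (range_nonempty Φ)
      (hc.symm.trans_lt (lt_add_of_pos_right c hε))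
    obtain ⟨g, hg, hmin⟩ := hlsc.exists_forall_le_add_mul_dist hbdd hε g₀
    obtain ⟨u, hu, hu'⟩ := exists_norm_fderiv_le_of_forall_pathSup_le hF g hε
      (hF0.trans_lt (hα.trans_le (hΦ g))) (hFe.trans_lt (hα.trans_le (hΦ g))) hmin
    exact ⟨u, hu ▸ hcΦ g, hu.trans_le (hg.trans hg₀.le), hu'⟩
  choose u hcu huc hu' using hseq
  have hzero := tendsto_one_div_add_atTop_nhds_zero_nat (𝕜 := ℝ)
  have hFu : Tendsto (fun n => F (u n)) atTop (𝓝 c) :=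
    tendsto_of_tendsto_of_tendsto_of_le_of_le tendsto_const_nhds
      (by simpa using hzero.const_add c) hcu huc
  have hDFu : Tendsto (fun n => ‖fderiv ℝ F (u n)‖) atTop (𝓝 0) :=
    squeeze_zero (fun _ => norm_nonneg _) hu' (by simpa using hzero.const_mul 2)
  have hbound : ∃ M : ℝ, ∀ n, |F (u n)| ≤ M := by
    obtain ⟨M, hM⟩ := hFu.abs.bddAbove_range
    exact ⟨M, forall_mem_range.1 hM⟩
  obtain ⟨φ, hφ, x, hx⟩ := hPS u hbound hDFu
  refine ⟨x, ?_, ?_⟩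
  · exact tendsto_nhds_unique ((hF.continuous.tendsto x).comp hx) (hFu.comp hφ.tendsto_atTop)
  · exact norm_eq_zero.1 (tendsto_nhds_unique ((hderiv_cont.norm.tendsto x).comp hx)
      (hDFu.comp hφ.tendsto_atTop))
end
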